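/- Let D be a set of closed normal λ-terms and T, T′ two closed λ-terms. If T is a storage operator for D and T′ ≃β T, then T′ is also a storage operator for D. -/

import Mathlib

/- Pure untyped λ-calculus with de Bruijn indices. -/

inductive Lam : Type
  | var : ℕ → Lam
  | app : Lam → Lam → Lam
  | abs : Lam → Lam
  deriving DecidableEq

namespace Lam

/-- Renaming of free variables. -/
def rename (ρ : ℕ → ℕ) : Lam → Lam
  | var i => var (ρ i)
  | app u v => app (u.rename ρ) (v.rename ρ)
  | abs u => abs (u.rename (fun i => match i with | 0 => 0 | j+1 => ρ j + 1))

/-- Lifting of a simultaneous substitution under a binder. -/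
def liftSub (σ : ℕ → Lam) : ℕ → Lam
  | 0 => var 0
  | i+1 => (σ i).rename (· + 1)

/-- Simultaneous (capture-avoiding) substitution of the free variables. -/
def subst (σ : ℕ → Lam) : Lam → Lam
  | var i => σ i
  | app u v => app (u.subst σ) (v.subst σ)
  | abs u => abs (u.subst (liftSub σ))

/-- `u.subst0 v` is `u[v/x]` for the first variable. -/
def subst0 (u v : Lam) : Lam :=
  u.subst (fun i => match i with | 0 => v | j+1 => var j)

/-- One step of β-reduction (anywhere in the term). -/
inductive Beta : Lam → Lam → Prop
  | beta (u v : Lam) : Beta (app (abs u) v) (u.subst0 v)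
  | appL {u u'} (v) : Beta u u' → Beta (app u v) (app u' v)
  | appR (u) {v v'} : Beta v v' → Beta (app u v) (app u v')
  | abs {u u'} : Beta u u' → Beta (abs u) (abs u')

/-- β-equivalence `≃β`. -/
def BetaEq : Lam → Lam → Prop := Relation.EqvGen Beta

/-- A term is normal if it has no β-redex. -/
def Normal (t : Lam) : Prop := ∀ u, ¬ Beta t u

def IsAbs : Lam → Prop
  | abs _ => True
  | _ => False

/-- One step of head reduction: reduction of the head redex. -/
inductive HeadStep : Lam → Lam → Prop
  | beta (u v) : HeadStep (app (abs u) v) (u.subst0 v)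
  | appL {u u'} (v) : ¬ u.IsAbs → HeadStep u u' → HeadStep (app u v) (app u' v)
  | abs {u u'} : HeadStep u u' → HeadStep (abs u) (abs u')

/-- `HeadRedN n u v` : `u` head-reduces to `v` in exactly `n` steps (`u ≻ v` with `n(u,v) = n`). -/
inductive HeadRedN : ℕ → Lam → Lam → Prop
  | refl (u) : HeadRedN 0 u u
  | step {n u v w} : HeadStep u v → HeadRedN n v w → HeadRedN (n+1) u w

/-- `u ≻ v` : `v` is obtained from `u` by some head reductions. -/
def HeadRed (u v : Lam) : Prop := ∃ n, HeadRedN n u v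

/-- Head normal form. -/
def HeadNF (t : Lam) : Prop := ∀ u, ¬ HeadStep t u

def ClosedUnder : ℕ → Lam → Prop
  | k, var i => i < k
  | k, app u v => ClosedUnder k u ∧ ClosedUnder k v
  | k, abs u => ClosedUnder (k+1) u

/-- Closed λ-term. -/
def Closed (t : Lam) : Prop := ClosedUnder 0 t

/-- `(f)ⁿx` : `iterApp f n x = (f)(f)…(f)x`. -/
def iterApp (f : Lam) : ℕ → Lam → Lam
  | 0, x => x
  | n+1, x => app f (iterApp f n x)

/-- The Church integer `n̲ = λxλf(f)ⁿx`. -/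
def church (n : ℕ) : Lam := abs (abs (iterApp (var 0) n (var 1)))

/-- `(t)w₁…wₖ`. -/
def appList (t : Lam) (ws : List Lam) : Lam := ws.foldl app t

/-- `T` is a storage operator for the closed normal term `t` :
there is `τ ≃β t` such that for every `θ ≃β t` there is a substitution `σ`
(not touching the fresh variable `f`, represented by the de Bruijn index `0`)
with `(T)θf ≻ (f)σ(τ)`. -/
def IsStorageFor (T t : Lam) : Prop :=
  Closed T ∧ ∃ τ, BetaEq τ t ∧ ∀ θ, BetaEq θ t →
    ∃ σ : ℕ → Lam, σ 0 = var 0 ∧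
      HeadRed (app (app T θ) (var 0)) (app (var 0) (τ.subst σ))

end Lam

namespace Lam

/-! ### Substitution lemmas -/

def up (ρ : ℕ → ℕ) : ℕ → ℕ
  | 0 => 0
  | j+1 => ρ j + 1

def scons (v : Lam) (σ : ℕ → Lam) : ℕ → Lam
  | 0 => v
  | j+1 => σ j

theorem rename_abs (ρ : ℕ → ℕ) (u : Lam) : (abs u).rename ρ = abs (u.rename (up ρ)) := by
  have : (fun i => match i with | 0 => 0 | j+1 => ρ j + 1) = up ρ := by
    funext i; cases i <;> rfl
  simp only [rename]
  exact congrArg (fun f => abs (u.rename f)) this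

theorem subst0_eq (u v : Lam) : u.subst0 v = u.subst (scons v var) := by
  have : (fun i => match i with | 0 => v | j+1 => var j) = scons v var := by
    funext i; cases i <;> rfl
  unfold subst0
  exact congrArg (fun f => u.subst f) this

theorem rename_subst (u : Lam) : ∀ (ρ : ℕ → ℕ) (σ : ℕ → Lam),
    (u.rename ρ).subst σ = u.subst (fun i => σ (ρ i)) := by
  induction u with
  | var i => intros; rfl
  | app u v hu hv => intro ρ σ; simp [rename, subst, hu, hv]
  | abs u hu =>
    intro ρ σ
    rw [rename_abs]; simp only [subst, hu]
    congr 2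
    funext i; cases i <;> rfl

theorem rename_rename (u : Lam) : ∀ (ρ ρ' : ℕ → ℕ),
    (u.rename ρ).rename ρ' = u.rename (fun i => ρ' (ρ i)) := by
  induction u with
  | var i => intros; rfl
  | app u v hu hv => intro ρ σ; simp [rename, hu, hv]
  | abs u hu =>
    intro ρ σ
    simp only [rename_abs, hu]
    congr 2
    funext i; cases i <;> rfl

theorem subst_rename (u : Lam) : ∀ (σ : ℕ → Lam) (ρ : ℕ → ℕ),
    (u.subst σ).rename ρ = u.subst (fun i => (σ i).rename ρ) := by
  induction u with
  | var i => intros; rfl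
  | app u v hu hv => intro ρ σ; simp [rename, subst, hu, hv]
  | abs u hu =>
    intro σ ρ
    simp only [subst, rename_abs, hu]
    congr 2
    funext i
    cases i with
    | zero => rfl
    | succ i => simp only [liftSub, rename_rename]; rfl

theorem subst_subst (u : Lam) : ∀ (σ δ : ℕ → Lam),
    (u.subst σ).subst δ = u.subst (fun i => (σ i).subst δ) := by
  induction u with
  | var i => intros; rfl
  | app u v hu hv => intro ρ σ; simp [subst, hu, hv]
  | abs u hu =>
    intro σ δ
    simp only [subst, hu]
    congr 2
    funext i
    cases i with
    | zero => rfl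
    | succ i => simp only [liftSub, rename_subst, subst_rename]

theorem liftSub_var : liftSub var = var := by
  funext i; cases i <;> rfl

theorem subst_var (u : Lam) : u.subst var = u := by
  induction u with
  | var i => rfl
  | app u v hu hv => simp [subst, hu, hv]
  | abs u hu => simp [subst, liftSub_var, hu]

theorem lift_subst0 (u v : Lam) (r : ℕ → Lam) :
    (u.subst (liftSub r)).subst0 v = u.subst (scons v r) := by
  rw [subst0_eq, subst_subst]
  congr 1
  funext i
  cases i with
  | zero => rfl
  | succ i =>
    simp only [liftSub, rename_subst, scons]
    exact subst_var _

theorem subst0_subst (u v : Lam) (σ : ℕ → Lam) :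
    (u.subst0 v).subst σ = (u.subst (liftSub σ)).subst0 (v.subst σ) := by
  rw [lift_subst0, subst0_eq, subst_subst]
  congr 1
  funext i; cases i <;> rfl

theorem rename_eq_subst (u : Lam) (ρ : ℕ → ℕ) : u.rename ρ = u.subst (fun i => var (ρ i)) := by
  have := subst_rename u var ρ
  rw [subst_var] at this
  exact this

theorem subst0_rename (u v : Lam) (ρ : ℕ → ℕ) :
    (u.subst0 v).rename ρ = (u.rename (up ρ)).subst0 (v.rename ρ) := by
  simp only [rename_eq_subst, subst0_subst]
  congr 2
  funext i; cases i <;> rfl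

theorem subst_congr_closed (u : Lam) : ∀ (n : ℕ) (σ σ' : ℕ → Lam), ClosedUnder n u →
    (∀ i, i < n → σ i = σ' i) → u.subst σ = u.subst σ' := by
  induction u with
  | var i => intro n σ σ' h h'; exact h' i h
  | app u v hu hv =>
    intro n σ σ' h h'
    simp only [subst, hu n σ σ' h.1 h', hv n σ σ' h.2 h']
  | abs u hu =>
    intro n σ σ' h h'
    simp only [subst]
    rw [hu (n+1) (liftSub σ) (liftSub σ') h]
    intro i hi
    cases i with
    | zero => rfl
    | succ i => simp only [liftSub, h' i (by omega)]

theorem closed_mono (u : Lam) : ∀ n m, n ≤ m → ClosedUnder n u → ClosedUnder m u := by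
  induction u with
  | var i => intro n m h h'; exact lt_of_lt_of_le h' h
  | app u v hu hv => intro n m h h'; exact ⟨hu n m h h'.1, hv n m h h'.2⟩
  | abs u hu => intro n m h h'; exact hu (n+1) (m+1) (by omega) h'

theorem closed_rename (u : Lam) : ∀ n m (ρ : ℕ → ℕ), ClosedUnder n u →
    (∀ i, i < n → ρ i < m) → ClosedUnder m (u.rename ρ) := by
  induction u with
  | var i => intro n m ρ h h'; exact h' i h
  | app u v hu hv => intro n m ρ h h'; exact ⟨hu n m ρ h.1 h', hv n m ρ h.2 h'⟩
  | abs u hu =>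
    intro n m ρ h h'
    rw [rename_abs]
    refine hu (n+1) (m+1) _ h ?_
    intro i hi
    cases i with
    | zero => simp [up]
    | succ i => have := h' i (by omega); simp only [up]; omega

theorem closed_subst (u : Lam) : ∀ n m (σ : ℕ → Lam), ClosedUnder n u →
    (∀ i, i < n → ClosedUnder m (σ i)) → ClosedUnder m (u.subst σ) := by
  induction u with
  | var i => intro n m ρ h h'; exact h' i h
  | app u v hu hv => intro n m ρ h h'; exact ⟨hu n m ρ h.1 h', hv n m ρ h.2 h'⟩
  | abs u hu =>
    intro n m ρ h h'
    refine hu (n+1) (m+1) _ h ?_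
    intro i hi
    cases i with
    | zero => exact Nat.succ_pos _
    | succ i => exact closed_rename _ m _ _ (h' i (by omega)) (fun i hi => by simpa using hi)

theorem closed_subst0 {u v : Lam} {n : ℕ} (hu : ClosedUnder (n+1) u) (hv : ClosedUnder n v) :
    ClosedUnder n (u.subst0 v) := by
  rw [subst0_eq]
  refine closed_subst u (n+1) n _ hu ?_
  intro i hi
  cases i with
  | zero => exact hv
  | succ i => exact Nat.lt_of_succ_lt_succ hi

/-! ### Reduction -/

abbrev BS : Lam → Lam → Prop := Relation.ReflTransGen Beta

theorem BS.appc {u u' v v' : Lam} (h : BS u u') (h' : BS v v') : BS (app u v) (app u' v') :=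
  (h.lift (fun x => app x v) (fun _ _ h => Beta.appL v h)).trans
    (h'.lift (fun x => app u' x) (fun _ _ h => Beta.appR u' h))

theorem BS.absc {u u' : Lam} (h : BS u u') : BS (abs u) (abs u') :=
  h.lift abs (fun _ _ h => Beta.abs h)

theorem BS.eq {u v : Lam} (h : BS u v) : BetaEq u v := by
  induction h with
  | refl => exact Relation.EqvGen.refl _
  | tail _ h ih => exact Relation.EqvGen.trans _ _ _ ih (Relation.EqvGen.rel _ _ h)

theorem BetaEq.refl' (u : Lam) : BetaEq u u := Relation.EqvGen.refl _
theorem BetaEq.symm' {u v : Lam} (h : BetaEq u v) : BetaEq v u := Relation.EqvGen.symm _ _ h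
theorem BetaEq.trans' {u v w : Lam} (h : BetaEq u v) (h' : BetaEq v w) : BetaEq u w :=
  Relation.EqvGen.trans _ _ _ h h'

theorem BetaEq.map {g : Lam → Lam} (hg : ∀ u v, Beta u v → Beta (g u) (g v)) {u v : Lam}
    (h : BetaEq u v) : BetaEq (g u) (g v) := by
  induction h with
  | rel _ _ h => exact Relation.EqvGen.rel _ _ (hg _ _ h)
  | refl => exact Relation.EqvGen.refl _
  | symm _ _ _ ih => exact Relation.EqvGen.symm _ _ ih
  | trans _ _ _ _ _ ih1 ih2 => exact Relation.EqvGen.trans _ _ _ ih1 ih2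

theorem BetaEq.appc {u u' v v' : Lam} (h : BetaEq u u') (h' : BetaEq v v') :
    BetaEq (app u v) (app u' v') :=
  BetaEq.trans' (h.map (g := fun x => app x v) (fun _ _ h => Beta.appL v h))
    (h'.map (g := fun x => app u' x) (fun _ _ h => Beta.appR u' h))

/-! ### Confluence -/

inductive Par : Lam → Lam → Prop
  | var (i) : Par (var i) (var i)
  | app {u u' v v'} : Par u u' → Par v v' → Par (app u v) (app u' v')
  | abs {u u'} : Par u u' → Par (abs u) (abs u')
  | beta {u u' v v'} : Par u u' → Par v v' → Par (app (abs u) v) (u'.subst0 v')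

theorem Par.refl (u : Lam) : Par u u := by
  induction u with
  | var i => exact Par.var i
  | app u v hu hv => exact Par.app hu hv
  | abs u hu => exact Par.abs hu

theorem Par.ren {u u' : Lam} (h : Par u u') : ∀ ρ, Par (u.rename ρ) (u'.rename ρ) := by
  induction h with
  | var i => intro ρ; exact Par.var _
  | app _ _ h1 h2 => intro ρ; exact Par.app (h1 ρ) (h2 ρ)
  | abs _ h => intro ρ; simp only [rename_abs]; exact Par.abs (h _)
  | beta _ _ h1 h2 =>
    intro ρ
    rw [subst0_rename]
    simp only [rename]
    exact Par.beta (h1 _) (h2 _)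

theorem Par.sub {u u' : Lam} (h : Par u u') : ∀ σ σ' : ℕ → Lam, (∀ i, Par (σ i) (σ' i)) →
    Par (u.subst σ) (u'.subst σ') := by
  have lift : ∀ σ σ' : ℕ → Lam, (∀ i, Par (σ i) (σ' i)) →
      ∀ i, Par (liftSub σ i) (liftSub σ' i) := by
    intro σ σ' h i
    cases i with
    | zero => exact Par.var 0
    | succ i => exact (h i).ren _
  induction h with
  | var i => intro σ σ' h; exact h i
  | app _ _ h1 h2 => intro σ σ' h; exact Par.app (h1 _ _ h) (h2 _ _ h)
  | abs _ h1 => intro σ σ' h; exact Par.abs (h1 _ _ (lift _ _ h))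
  | beta _ _ h1 h2 =>
    intro σ σ' h
    rw [subst0_subst]
    exact Par.beta (h1 _ _ (lift _ _ h)) (h2 _ _ h)

theorem Par.sub0 {u u' v v' : Lam} (h : Par u u') (h' : Par v v') :
    Par (u.subst0 v) (u'.subst0 v') := by
  simp only [subst0_eq]
  refine h.sub _ _ ?_
  intro i
  cases i with
  | zero => exact h'
  | succ i => exact Par.var i

def dev : Lam → Lam
  | var i => var i
  | abs u => abs (dev u)
  | app (abs u) v => (dev u).subst0 (dev v)
  | app (var i) v => app (var i) (dev v)
  | app (app a b) v => app (dev (app a b)) (dev v)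

theorem Par.tri {u v : Lam} (h : Par u v) : Par v (dev u) := by
  induction h with
  | var i => exact Par.var i
  | @app u u' v v' h1 h2 ih1 ih2 =>
    cases u with
    | var i => cases h1; exact Par.app (Par.var _) ih2
    | app a b => simp only [dev]; exact Par.app ih1 ih2
    | abs a =>
      cases h1 with
      | abs h1 =>
        simp only [dev] at ih1 ⊢
        cases ih1 with
        | abs ih1 => exact Par.beta ih1 ih2
  | abs _ ih => exact Par.abs ih
  | beta _ _ ih1 ih2 => simp only [dev]; exact ih1.sub0 ih2

theorem Beta.par {u v : Lam} (h : Beta u v) : Par u v := by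
  induction h with
  | beta u v => exact Par.beta (Par.refl _) (Par.refl _)
  | appL v _ ih => exact Par.app ih (Par.refl _)
  | appR u _ ih => exact Par.app (Par.refl _) ih
  | abs _ ih => exact Par.abs ih

theorem Par.bs {u v : Lam} (h : Par u v) : BS u v := by
  induction h with
  | var i => exact Relation.ReflTransGen.refl
  | app _ _ h1 h2 => exact BS.appc h1 h2
  | abs _ h => exact BS.absc h
  | beta _ _ h1 h2 => exact (BS.appc (BS.absc h1) h2).tail (Beta.beta _ _)

theorem BS.pars {u v : Lam} (h : BS u v) : Relation.ReflTransGen Par u v :=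
  h.lift id (fun _ _ h => h.par)

theorem pars_bs {u v : Lam} (h : Relation.ReflTransGen Par u v) : BS u v := by
  induction h with
  | refl => exact Relation.ReflTransGen.refl
  | tail _ h ih => exact ih.trans h.bs

theorem BS.confl {u v w : Lam} (h1 : BS u v) (h2 : BS u w) : ∃ x, BS v x ∧ BS w x := by
  obtain ⟨x, h, h'⟩ := Relation.church_rosser (r := Par)
    (fun a b c hb hc => ⟨dev a, Relation.ReflGen.single hb.tri,
      Relation.ReflTransGen.single hc.tri⟩) h1.pars h2.pars
  exact ⟨x, pars_bs h, pars_bs h'⟩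

theorem BetaEq.join {u v : Lam} (h : BetaEq u v) : ∃ x, BS u x ∧ BS v x := by
  induction h with
  | rel _ _ h => exact ⟨_, Relation.ReflTransGen.single h, Relation.ReflTransGen.refl⟩
  | refl => exact ⟨_, Relation.ReflTransGen.refl, Relation.ReflTransGen.refl⟩
  | symm _ _ _ ih => obtain ⟨x, h, h'⟩ := ih; exact ⟨x, h', h⟩
  | trans _ _ _ _ _ ih1 ih2 =>
    obtain ⟨x, h, h'⟩ := ih1
    obtain ⟨y, k, k'⟩ := ih2
    obtain ⟨z, l, l'⟩ := h'.confl k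
    exact ⟨z, h.trans l, k'.trans l'⟩

theorem BetaEq.normal {u t : Lam} (h : BetaEq u t) (ht : Normal t) : BS u t := by
  obtain ⟨x, h1, h2⟩ := h.join
  cases Relation.ReflTransGen.cases_head h2 with
  | inl h => subst h; exact h1
  | inr h => obtain ⟨c, hc, _⟩ := h; exact absurd hc (ht c)

/-! ### Weak head reduction -/

inductive WStep : Lam → Lam → Prop
  | beta (u v) : WStep (app (abs u) v) (u.subst0 v)
  | appL {u u'} (v) : WStep u u' → WStep (app u v) (app u' v)

inductive WN : ℕ → Lam → Lam → Prop
  | refl (u) : WN 0 u u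
  | step {n u v w} : WStep u v → WN n v w → WN (n+1) u w

def WR (u v : Lam) : Prop := ∃ n, WN n u v

theorem WStep.det {u v w : Lam} (h : WStep u v) : WStep u w → v = w := by
  intro h'
  induction h generalizing w with
  | beta u v =>
    cases h' with
    | beta => rfl
    | appL _ h => cases h
  | appL v h ih =>
    cases h' with
    | beta => cases h
    | appL _ h' => rw [ih h']

theorem WN.trans {n m : ℕ} {u v w : Lam} (h : WN n u v) (h' : WN m v w) : WN (n+m) u w := by
  induction h with
  | refl => simpa using h'
  | step s _ ih => rw [Nat.add_right_comm]; exact WN.step s (ih h')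

theorem WN.appL {n : ℕ} {u u' : Lam} (h : WN n u u') (v : Lam) : WN n (app u v) (app u' v) := by
  induction h with
  | refl => exact WN.refl _
  | step s _ ih => exact WN.step (WStep.appL v s) ih

theorem WN.appList {n : ℕ} (us : List Lam) : ∀ {u u' : Lam}, WN n u u' →
    WN n (appList u us) (appList u' us) := by
  induction us with
  | nil => intro u u' h; exact h
  | cons a us ih => intro u u' h; exact ih (h.appL a)

theorem WStep.sub {u v : Lam} (h : WStep u v) (σ : ℕ → Lam) :
    WStep (u.subst σ) (v.subst σ) := by
  induction h with
  | beta u v => rw [subst0_subst]; exact WStep.beta _ _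
  | appL v _ ih => exact WStep.appL _ ih

theorem WN.sub {n : ℕ} {u v : Lam} (h : WN n u v) (σ : ℕ → Lam) :
    WN n (u.subst σ) (v.subst σ) := by
  induction h with
  | refl => exact WN.refl _
  | step s _ ih => exact WN.step (s.sub σ) ih

theorem WN.split {n m : ℕ} {a b c : Lam} (h : WN n a b) (h' : WN m a c)
    (hc : ∀ x, ¬ WStep c x) : ∃ k, m = n + k ∧ WN k b c := by
  induction h generalizing m with
  | refl => exact ⟨m, by simp, h'⟩
  | step s _ ih =>
    cases h' with
    | refl => exact absurd s (hc _)
    | step s' h' =>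
      have := s.det s'
      subst this
      obtain ⟨k, hk, hk'⟩ := ih h'
      exact ⟨k, by omega, hk'⟩

theorem WR.refl (u : Lam) : WR u u := ⟨0, WN.refl u⟩
theorem WR.trans {u v w : Lam} (h : WR u v) (h' : WR v w) : WR u w := by
  obtain ⟨n, h⟩ := h
  obtain ⟨m, h'⟩ := h'
  exact ⟨_, h.trans h'⟩
theorem WR.appL {u u' : Lam} (h : WR u u') (v : Lam) : WR (app u v) (app u' v) := by
  obtain ⟨n, h⟩ := h
  exact ⟨n, h.appL v⟩
theorem WR.sub {u v : Lam} (h : WR u v) (σ : ℕ → Lam) : WR (u.subst σ) (v.subst σ) := by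
  obtain ⟨n, h⟩ := h
  exact ⟨n, h.sub σ⟩
theorem WStep.wr {u v : Lam} (h : WStep u v) : WR u v := ⟨1, WN.step h (WN.refl _)⟩

theorem WStep.beta' {u v : Lam} (h : WStep u v) : Beta u v := by
  induction h with
  | beta u v => exact Beta.beta _ _
  | appL v _ ih => exact Beta.appL _ ih

theorem WR.bs {u v : Lam} (h : WR u v) : BS u v := by
  obtain ⟨n, h⟩ := h
  induction h with
  | refl => exact Relation.ReflTransGen.refl
  | step s _ ih => exact Relation.ReflTransGen.head s.beta' ih

theorem WStep.head {u v : Lam} (h : WStep u v) : HeadStep u v := by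
  induction h with
  | beta u v => exact HeadStep.beta _ _
  | appL v h ih =>
    refine HeadStep.appL _ ?_ ih
    cases h <;> exact id

theorem WR.head {u v : Lam} (h : WR u v) : HeadRed u v := by
  obtain ⟨n, h⟩ := h
  refine ⟨n, ?_⟩
  induction h with
  | refl => exact HeadRedN.refl _
  | step s _ ih => exact HeadRedN.step s.head ih

theorem HeadStep.w {u v : Lam} (h : HeadStep u v) (hu : ¬ u.IsAbs) : WStep u v := by
  induction h with
  | beta u v => exact WStep.beta _ _
  | appL v h _ ih => exact WStep.appL _ (ih h)
  | abs => exact absurd trivial hu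

theorem HeadRedN.abs_inv {n : ℕ} {u v : Lam} (h : HeadRedN n u v) (hu : u.IsAbs) : v.IsAbs := by
  induction h with
  | refl => exact hu
  | step s _ ih =>
    apply ih
    cases s with
    | beta => exact hu.elim
    | appL => exact hu.elim
    | abs => trivial

theorem HeadRed.wr {u v : Lam} (h : HeadRed u v) (hv : ¬ v.IsAbs) : WR u v := by
  obtain ⟨n, h⟩ := h
  induction h with
  | refl => exact WR.refl _
  | step s h ih =>
    exact (HeadStep.w s (fun hu => hv ((HeadRedN.step s h).abs_inv hu))).wr.trans (ih hv)

/-! ### Standardization -/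

inductive Sd : Lam → Lam → Prop
  | var {m i} : WR m (var i) → Sd m (var i)
  | app {m a b a' b'} : WR m (app a b) → Sd a a' → Sd b b' → Sd m (app a' b')
  | abs {m a a'} : WR m (abs a) → Sd a a' → Sd m (abs a')

theorem Sd.refl (u : Lam) : Sd u u := by
  induction u with
  | var i => exact Sd.var (WR.refl _)
  | app u v hu hv => exact Sd.app (WR.refl _) hu hv
  | abs u hu => exact Sd.abs (WR.refl _) hu

theorem Sd.pre {m n p : Lam} (h : WR m n) (h' : Sd n p) : Sd m p := by
  cases h' with
  | var k => exact Sd.var (h.trans k)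
  | app k a b => exact Sd.app (h.trans k) a b
  | abs k a => exact Sd.abs (h.trans k) a

theorem WR.ren {u v : Lam} (h : WR u v) (ρ : ℕ → ℕ) : WR (u.rename ρ) (v.rename ρ) := by
  simp only [rename_eq_subst]; exact h.sub _

theorem Sd.ren {u u' : Lam} (h : Sd u u') : ∀ ρ, Sd (u.rename ρ) (u'.rename ρ) := by
  induction h with
  | var k => intro ρ; exact Sd.var (k.ren ρ)
  | app k _ _ h1 h2 => intro ρ; exact Sd.app (k.ren ρ) (h1 ρ) (h2 ρ)
  | abs k _ h =>
    intro ρ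
    have := k.ren ρ
    rw [rename_abs] at this ⊢
    exact Sd.abs this (h _)

theorem Sd.sub {u u' : Lam} (h : Sd u u') : ∀ σ σ' : ℕ → Lam, (∀ i, Sd (σ i) (σ' i)) →
    Sd (u.subst σ) (u'.subst σ') := by
  induction h with
  | var k => intro σ σ' h; exact Sd.pre (k.sub σ) (h _)
  | app k _ _ h1 h2 => intro σ σ' h; exact Sd.app (k.sub σ) (h1 _ _ h) (h2 _ _ h)
  | abs k _ h1 =>
    intro σ σ' h
    refine Sd.abs (k.sub σ) (h1 _ _ ?_)
    intro i
    cases i with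
    | zero => exact Sd.refl _
    | succ i => exact (h i).ren _

theorem Sd.step {u v w : Lam} (h : Sd u v) (h' : Beta v w) : Sd u w := by
  induction h' generalizing u with
  | beta a b =>
    cases h with
    | app k h1 h2 =>
      cases h1 with
      | abs k' h1 =>
        refine Sd.pre ((k.trans (k'.appL _)).trans (WStep.beta _ _).wr) ?_
        simp only [subst0_eq]
        refine h1.sub _ _ ?_
        intro i
        cases i with
        | zero => exact h2
        | succ i => exact Sd.refl _
  | appL v _ ih => cases h with | app k h1 h2 => exact Sd.app k (ih h1) h2
  | appR v _ ih => cases h with | app k h1 h2 => exact Sd.app k h1 (ih h2)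
  | abs _ ih => cases h with | abs k h1 => exact Sd.abs k (ih h1)

theorem BS.sd {u v : Lam} (h : BS u v) : Sd u v := by
  induction h with
  | refl => exact Sd.refl _
  | tail _ h ih => exact ih.step h

theorem Sd.bs {u v : Lam} (h : Sd u v) : BS u v := by
  induction h with
  | var k => exact k.bs
  | app k _ _ h1 h2 => exact k.bs.trans (BS.appc h1 h2)
  | abs k _ h => exact k.bs.trans (BS.absc h)

/-! ### Neutral terms -/

theorem appList_snoc (h : Lam) (us : List Lam) (a : Lam) :
    appList h (us ++ [a]) = app (appList h us) a := by
  simp [appList, List.foldl_append]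

theorem appList_subst (us : List Lam) : ∀ (h : Lam) (σ : ℕ → Lam),
    (appList h us).subst σ = appList (h.subst σ) (us.map (fun u => u.subst σ)) := by
  induction us with
  | nil => intros; rfl
  | cons a us ih => intro h σ; exact ih (app h a) σ

theorem appList_closed (us : List Lam) : ∀ (h : Lam) (n : ℕ),
    ClosedUnder n (appList h us) ↔ ClosedUnder n h ∧ ∀ u ∈ us, ClosedUnder n u := by
  induction us with
  | nil => intros; simp [appList]
  | cons a us ih =>
    intro h n
    refine (ih (app h a) n).trans ?_
    simp only [ClosedUnder, List.mem_cons, forall_eq_or_imp, and_assoc]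

theorem not_abs_appList_var (us : List Lam) (j : ℕ) : ¬ (appList (var j) us).IsAbs := by
  induction us using List.reverseRecOn with
  | nil => exact id
  | append_singleton us a _ => rw [appList_snoc]; exact id

theorem not_wstep_appList_var (us : List Lam) (j : ℕ) : ∀ x, ¬ WStep (appList (var j) us) x := by
  induction us using List.reverseRecOn with
  | nil => intro x h; cases h
  | append_singleton us a ih =>
    intro x h
    rw [appList_snoc] at h
    generalize hw : appList (var j) us = w at h
    cases h with
    | beta u v => exact not_abs_appList_var us j (by rw [hw]; trivial)
    | appL _ h => subst hw; exact ih _ h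

theorem appList_beq {us us' : List Lam} (h : List.Forall₂ BetaEq us us') : ∀ {a a' : Lam},
    BetaEq a a' → BetaEq (appList a us) (appList a' us') := by
  induction h with
  | nil => intro a a' h; exact h
  | cons h _ ih => intro a a' k; exact ih (k.appc h)

theorem f2_trans {l1 l2 l3 : List Lam} (h : List.Forall₂ BetaEq l1 l2)
    (h' : List.Forall₂ BetaEq l2 l3) : List.Forall₂ BetaEq l1 l3 := by
  induction h generalizing l3 with
  | nil => exact h'
  | cons a _ ih =>
    cases h' with
    | cons b h' => exact List.Forall₂.cons (a.trans' b) (ih h')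

theorem bs_neut (j : ℕ) (us : List Lam) : ∀ {L : Lam}, BS (appList (var j) us) L →
    ∃ us', L = appList (var j) us' ∧ List.Forall₂ BetaEq us us' := by
  intro L h
  induction h with
  | refl => exact ⟨us, rfl, List.forall₂_same.2 (fun x _ => BetaEq.refl' x)⟩
  | tail _ h ih =>
    obtain ⟨vs, rfl, hv⟩ := ih
    suffices H : ∀ (vs : List Lam) {c : Lam}, Beta (appList (var j) vs) c →
        ∃ us', c = appList (var j) us' ∧ List.Forall₂ BetaEq vs us' by
      obtain ⟨ws, hw, hw'⟩ := H vs h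
      exact ⟨ws, hw, f2_trans hv hw'⟩
    clear * -
    intro vs
    induction vs using List.reverseRecOn with
    | nil => intro c h; cases h
    | append_singleton vs a ih =>
      intro c h
      rw [appList_snoc] at h
      generalize hw : appList (var j) vs = w at h
      cases h with
      | beta u v => exact absurd (by rw [hw]; trivial) (not_abs_appList_var vs j)
      | appL _ h =>
        subst hw
        obtain ⟨ws, rfl, hw'⟩ := ih h
        exact ⟨ws ++ [a], (appList_snoc _ _ _).symm,
          List.rel_append hw' (List.Forall₂.cons (BetaEq.refl' _) List.Forall₂.nil)⟩
      | appR _ h =>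
        subst hw
        exact ⟨vs ++ [_], (appList_snoc _ _ _).symm,
          List.rel_append (List.forall₂_same.2 (fun x _ => BetaEq.refl' x))
            (List.Forall₂.cons (Relation.EqvGen.rel _ _ h) List.Forall₂.nil)⟩

theorem sd_neut (j : ℕ) (us : List Lam) : ∀ {M : Lam}, Sd M (appList (var j) us) →
    ∃ us', WR M (appList (var j) us') ∧ List.Forall₂ BetaEq us us' := by
  induction us using List.reverseRecOn with
  | nil => intro M h; cases h with | var k => exact ⟨[], k, List.Forall₂.nil⟩
  | append_singleton us a ih =>
    intro M h
    rw [appList_snoc] at h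
    cases h with
    | app k h1 h2 =>
      obtain ⟨ws, hw, hw'⟩ := ih h1
      refine ⟨ws ++ [_], ?_, List.rel_append hw'
        (List.Forall₂.cons h2.bs.eq.symm' List.Forall₂.nil)⟩
      rw [appList_snoc]
      exact k.trans (hw.appL _)

theorem beq_neut {M : Lam} {j : ℕ} {us : List Lam} (h : BetaEq M (appList (var j) us)) :
    ∃ us', WR M (appList (var j) us') ∧ List.Forall₂ BetaEq us us' := by
  obtain ⟨L, h1, h2⟩ := h.join
  obtain ⟨vs, rfl, hv⟩ := bs_neut j us h2
  obtain ⟨ws, hw, hw'⟩ := sd_neut j vs h1.sd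
  exact ⟨ws, hw, f2_trans hv hw'⟩

theorem spine (M : Lam) : (∃ j us, M = appList (var j) us) ∨ (∃ M', WStep M M') ∨ M.IsAbs := by
  induction M with
  | var i => exact Or.inl ⟨i, [], rfl⟩
  | abs u _ => exact Or.inr (Or.inr trivial)
  | app u v hu _ =>
    rcases hu with ⟨j, us, rfl⟩ | ⟨M', h⟩ | h
    · exact Or.inl ⟨j, us ++ [v], (appList_snoc _ _ _).symm⟩
    · exact Or.inr (Or.inl ⟨_, WStep.appL v h⟩)
    · cases u with
      | abs u => exact Or.inr (Or.inl ⟨_, WStep.beta u v⟩)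
      | var => exact h.elim
      | app => exact h.elim

theorem WStep.closed {u v : Lam} (h : WStep u v) {n : ℕ} (hu : ClosedUnder n u) :
    ClosedUnder n v := by
  induction h with
  | beta u v => exact closed_subst0 hu.1 hu.2
  | appL v _ ih => exact ⟨ih hu.1, hu.2⟩

theorem appList_eq_app_var {us : List Lam} {j : ℕ} {u : Lam}
    (h : appList (var j) us = app (var 0) u) : j = 0 ∧ us = [u] := by
  induction us using List.reverseRecOn with
  | nil => cases h
  | append_singleton us a _ =>
    rw [appList_snoc] at h
    injection h with h1 h2
    subst h2
    rcases List.eq_nil_or_concat us with rfl | ⟨vs, b, rfl⟩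
    · injection h1 with h1
      exact ⟨h1, rfl⟩
    · rw [List.concat_eq_append, appList_snoc] at h1
      cases h1

/-! ### The generic machine -/

abbrev Env := ℕ → Lam × List Lam

inductive Step : ℕ × Env × Lam → ℕ × Env × Lam → Prop
  | w {n E M M'} : WStep M M' → Step (n, E, M) (n, E, M')
  | abs {n E j s l u us} : 0 < j → j < n → E j = (Lam.abs s, l) →
      Step (n, E, appList (Lam.var j) (u :: us))
        (n+1, Function.update E n (s, u :: l), appList (Lam.var n) us)
  | app {n E j s1 s2 l us} : 0 < j → j < n → E j = (Lam.app s1 s2, l) →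
      Step (n, E, appList (Lam.var j) us)
        (n+1+1, Function.update (Function.update E n (s1, l)) (n+1) (s2, l),
          appList (Lam.var n) (Lam.var (n+1) :: us))
  | var {n E j i l v us} : 0 < j → j < n → E j = (Lam.var i, l) → l[i]? = some v →
      Step (n, E, appList (Lam.var j) us) (n, E, appList v us)

abbrev Steps := Relation.ReflTransGen Step

def WFE (n : ℕ) (E : Env) : Prop :=
  0 < n ∧ ∀ j, 0 < j → j < n → ClosedUnder (E j).2.length (E j).1 ∧ ∀ u ∈ (E j).2, ClosedUnder n u

def Interp (I : Lam → Lam → Prop) (n : ℕ) (E : Env) (σ : ℕ → Lam) : Prop :=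
  σ 0 = var 0 ∧ ∀ j, 0 < j → j < n → ∃ θ r, I θ (E j).1 ∧ σ j = θ.subst r ∧
    ∀ i u, (E j).2[i]? = some u → r i = u.subst σ

structure IP (b : ℕ) (I : Lam → Lam → Prop) : Prop where
  habs : ∀ θ s, I θ (abs s) → ∃ m θ', b ≤ m ∧ WN m θ (abs θ') ∧ I θ' s
  happ : ∀ θ s1 s2, I θ (app s1 s2) → ∃ m θ1 θ2, b ≤ m ∧ WN m θ (app θ1 θ2) ∧ I θ1 s1 ∧ I θ2 s2
  hvar : ∀ θ i, I θ (var i) → ∃ m, b ≤ m ∧ WN m θ (var i)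

theorem WFE.extend {n : ℕ} {E : Env} (h : WFE n E) {s : Lam} {l : List Lam}
    (hs : ClosedUnder l.length s) (hl : ∀ u ∈ l, ClosedUnder n u) :
    WFE (n+1) (Function.update E n (s, l)) := by
  refine ⟨Nat.succ_pos _, ?_⟩
  intro j hj hjn
  by_cases hjn' : j = n
  · subst hjn'
    simp only [Function.update_self]
    exact ⟨hs, fun u hu => closed_mono _ _ _ (Nat.le_succ _) (hl u hu)⟩
  · rw [Function.update_of_ne hjn']
    have := h.2 j hj (by omega)
    exact ⟨this.1, fun u hu => closed_mono _ _ _ (Nat.le_succ _) (this.2 u hu)⟩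

theorem upd_lt {n : ℕ} (σ : ℕ → Lam) (x : Lam) : ∀ i, i < n → Function.update σ n x i = σ i :=
  fun i hi => Function.update_of_ne (by omega) _ _

theorem subst_upd {n : ℕ} {u : Lam} (h : ClosedUnder n u) (σ : ℕ → Lam) (x : Lam) :
    u.subst (Function.update σ n x) = u.subst σ :=
  subst_congr_closed u n _ _ h (upd_lt σ x)

theorem Interp.extend {I : Lam → Lam → Prop} {n : ℕ} {E : Env} {σ : ℕ → Lam}
    (hw : WFE n E) (h : Interp I n E σ) {s : Lam} {l : List Lam}
    (hl : ∀ u ∈ l, ClosedUnder n u) {θ : Lam} {r : ℕ → Lam} (hI : I θ s)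
    (hr : ∀ i u, l[i]? = some u → r i = u.subst σ) :
    Interp I (n+1) (Function.update E n (s, l)) (Function.update σ n (θ.subst r)) := by
  refine ⟨by rw [upd_lt σ _ 0 hw.1]; exact h.1, ?_⟩
  intro j hj hjn
  by_cases hjn' : j = n
  · subst hjn'
    simp only [Function.update_self]
    refine ⟨θ, r, hI, rfl, ?_⟩
    intro i u hu
    rw [subst_upd (hl u (List.mem_of_getElem? hu))]
    exact hr i u hu
  · rw [Function.update_of_ne hjn', Function.update_of_ne hjn']
    obtain ⟨θ', r', h1, h2, h3⟩ := h.2 j hj (by omega)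
    refine ⟨θ', r', h1, h2, ?_⟩
    intro i u hu
    rw [subst_upd ((hw.2 j hj (by omega)).2 u (List.mem_of_getElem? hu))]
    exact h3 i u hu

theorem Step.wf {n n' : ℕ} {E E' : Env} {M M' : Lam} (h : Step (n, E, M) (n', E', M'))
    (hw : WFE n E) (hM : ClosedUnder n M) : n ≤ n' ∧ WFE n' E' ∧ ClosedUnder n' M' := by
  cases h with
  | w h => exact ⟨le_refl _, hw, h.closed hM⟩
  | @abs _ _ j s l u us hj hjn hE =>
    have hE' := hw.2 j hj hjn
    rw [hE] at hE'
    rw [appList_closed] at hM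
    refine ⟨Nat.le_succ _, hw.extend hE'.1 ?_, ?_⟩
    · intro v hv
      rcases List.mem_cons.1 hv with rfl | hv
      · exact hM.2 _ List.mem_cons_self
      · exact hE'.2 v hv
    · rw [appList_closed]
      exact ⟨Nat.lt_succ_self n, fun v hv => closed_mono _ _ _ (Nat.le_succ _)
        (hM.2 v (List.mem_cons_of_mem _ hv))⟩
  | @app _ _ j s1 s2 l us hj hjn hE =>
    have hE' := hw.2 j hj hjn
    rw [hE] at hE'
    rw [appList_closed] at hM
    refine ⟨by omega, (hw.extend hE'.1.1 hE'.2).extend hE'.1.2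
      (fun u hu => closed_mono _ _ _ (Nat.le_succ _) (hE'.2 u hu)), ?_⟩
    rw [appList_closed]
    refine ⟨show n < n + 1 + 1 by omega, ?_⟩
    intro v hv
    rcases List.mem_cons.1 hv with rfl | hv
    · exact Nat.lt_succ_self (n+1)
    · exact closed_mono _ _ _ (by omega) (hM.2 v hv)
  | @var _ _ j i l v us hj hjn hE hv =>
    have hE' := hw.2 j hj hjn
    rw [hE] at hE'
    rw [appList_closed] at hM ⊢
    exact ⟨le_refl _, hw, hE'.2 v (List.mem_of_getElem? hv), hM.2⟩

theorem map_upd {n : ℕ} {us : List Lam} (h : ∀ u ∈ us, ClosedUnder n u) (σ : ℕ → Lam) (x : Lam) :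
    us.map (fun u => u.subst (Function.update σ n x)) = us.map (fun u => u.subst σ) :=
  List.map_congr_left (fun u hu => subst_upd (h u hu) σ x)

theorem Step.sim {b : ℕ} {I : Lam → Lam → Prop} (hI : IP b I) (hb : b ≤ 1)
    {n n' : ℕ} {E E' : Env} {M M' : Lam}
    (h : Step (n, E, M) (n', E', M')) (hw : WFE n E) (hM : ClosedUnder n M) {σ : ℕ → Lam}
    (hσ : Interp I n E σ) : ∃ σ', Interp I n' E' σ' ∧
      ∃ m, b ≤ m ∧ WN m (M.subst σ) (M'.subst σ') := by
  cases h with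
  | w h => exact ⟨σ, hσ, 1, hb, WN.step (h.sub σ) (WN.refl _)⟩
  | @abs _ _ j s l u us hj hjn hE =>
    have hE' := hw.2 j hj hjn
    rw [hE] at hE'
    rw [appList_closed] at hM
    obtain ⟨θ, r, h1, h2, h3⟩ := hσ.2 j hj hjn
    rw [hE] at h1 h3
    obtain ⟨m, θ', hm, hθ, hI'⟩ := hI.habs _ _ h1
    refine ⟨_, hσ.extend hw (s := s) (l := u :: l) (θ := θ') (r := scons (u.subst σ) r) ?_ hI' ?_,
      m + 1, by omega, ?_⟩
    · intro v hv
      rcases List.mem_cons.1 hv with rfl | hv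
      · exact hM.2 _ List.mem_cons_self
      · exact hE'.2 v hv
    · intro i v hv
      cases i with
      | zero => simp at hv; subst hv; rfl
      | succ i => exact h3 i v (by simpa using hv)
    · rw [appList_subst, appList_subst,
        map_upd (fun v hv => hM.2 v (List.mem_cons_of_mem _ hv))]
      simp only [subst, Function.update_self, h2]
      refine WN.trans (WN.appList _ (hθ.sub r)) ?_
      rw [← lift_subst0]
      exact WN.appList _ (WN.step (WStep.beta _ _) (WN.refl _))
  | @app _ _ j s1 s2 l us hj hjn hE =>
    have hE' := hw.2 j hj hjn
    rw [hE] at hE'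
    rw [appList_closed] at hM
    obtain ⟨θ, r, h1, h2, h3⟩ := hσ.2 j hj hjn
    rw [hE] at h1 h3
    obtain ⟨m, θ1, θ2, hm, hθ, hI1, hI2⟩ := hI.happ _ _ _ h1
    refine ⟨_, (hσ.extend hw hE'.2 hI1 h3).extend (hw.extend hE'.1.1 hE'.2)
      (fun u hu => closed_mono _ _ _ (Nat.le_succ _) (hE'.2 u hu)) hI2 (r := r) ?_, m, hm, ?_⟩
    · intro i u hu
      rw [subst_upd (hE'.2 u (List.mem_of_getElem? hu))]
      exact h3 i u hu
    · rw [appList_subst, appList_subst, List.map_cons,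
        map_upd (fun v hv => closed_mono _ _ _ (Nat.le_succ _) (hM.2 v hv)),
        map_upd hM.2]
      have e : Function.update (Function.update σ n (θ1.subst r)) (n+1) (θ2.subst r) n
          = θ1.subst r := by
        rw [upd_lt _ _ n (Nat.lt_succ_self n), Function.update_self]
      simp only [subst, Function.update_self, e, h2]
      exact WN.appList _ (hθ.sub r)
  | @var _ _ j i l v us hj hjn hE hv =>
    obtain ⟨θ, r, h1, h2, h3⟩ := hσ.2 j hj hjn
    rw [hE] at h1 h3
    obtain ⟨m, hm, hθ⟩ := hI.hvar _ _ h1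
    refine ⟨σ, hσ, m, hm, ?_⟩
    rw [appList_subst, appList_subst]
    simp only [subst, h2]
    rw [← h3 i v hv]
    exact WN.appList _ (hθ.sub r)

theorem Steps.sim {b : ℕ} {I : Lam → Lam → Prop} (hI : IP b I) (hb : b ≤ 1)
    {S S' : ℕ × Env × Lam} (h : Steps S S') : ∀ {σ : ℕ → Lam},
    WFE S.1 S.2.1 → ClosedUnder S.1 S.2.2 → Interp I S.1 S.2.1 σ →
    WFE S'.1 S'.2.1 ∧ ClosedUnder S'.1 S'.2.2 ∧ ∃ σ', Interp I S'.1 S'.2.1 σ' ∧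
      WR (S.2.2.subst σ) (S'.2.2.subst σ') := by
  intro σ h1 h2 h3
  induction h with
  | refl => exact ⟨h1, h2, σ, h3, WR.refl _⟩
  | tail _ s ih =>
    obtain ⟨k1, k2, σ', k3, k4⟩ := ih
    obtain ⟨-, l1, l2⟩ := Step.wf s k1 k2
    obtain ⟨σ'', l3, m, -, l4⟩ := Step.sim hI hb s k1 k2 k3
    exact ⟨l1, l2, σ'', l3, k4.trans ⟨m, l4⟩⟩

/-- Termination of the generic machine. -/
theorem terminate {I : Lam → Lam → Prop} (hI : IP 1 I) (u : Lam) : ∀ (k n : ℕ) (E : Env) (M : Lam)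
    (σ : ℕ → Lam), WFE n E → ClosedUnder n M → Interp I n E σ →
    WN k (M.subst σ) (app (var 0) u) →
    ∃ n' E' τ, Steps (n, E, M) (n', E', app (var 0) τ) := by
  intro k
  induction k using Nat.strong_induction_on with
  | _ k ih =>
  intro n E M σ hw hM hσ hk
  have hnf : ∀ x, ¬ WStep (app (var 0) u) x := not_wstep_appList_var [u] 0
  have go : (∃ S, Step (n, E, M) S) → ∃ n' E' τ, Steps (n, E, M) (n', E', app (var 0) τ) := by
    rintro ⟨⟨n', E', M'⟩, hS⟩
    obtain ⟨-, h1, h2⟩ := hS.wf hw hM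
    obtain ⟨σ', h3, m, hm, h4⟩ := hS.sim hI (le_refl 1) hw hM hσ
    obtain ⟨k', hk', h5⟩ := h4.split hk hnf
    obtain ⟨n2, E2, τ, h6⟩ := ih k' (by omega) n' E' M' σ' h1 h2 h3 h5
    exact ⟨n2, E2, τ, Relation.ReflTransGen.head hS h6⟩
  rcases spine M with ⟨j, us, rfl⟩ | ⟨M', h⟩ | h
  · by_cases hj : j = 0
    · subst hj
      rw [appList_subst] at hk
      simp only [subst, hσ.1] at hk
      have e : appList (var 0) (us.map (fun u => u.subst σ)) = app (var 0) u := by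
        generalize hx : appList (var 0) (us.map (fun u => u.subst σ)) = x at hk
        cases hk with
        | refl => rfl
        | step s _ => subst hx; exact absurd s (not_wstep_appList_var _ _ _)
      obtain ⟨-, e⟩ := appList_eq_app_var e
      match us, e with
      | [a], _ => exact ⟨n, E, a, Relation.ReflTransGen.refl⟩
    · have hj : 0 < j := Nat.pos_of_ne_zero hj
      have hjn : j < n := ((appList_closed _ _ _).1 hM).1
      rcases hE : E j with ⟨s, l⟩
      have hE' := hw.2 j hj hjn
      rw [hE] at hE'
      cases s with
      | var i =>
        have hi : i < l.length := hE'.1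
        exact go ⟨_, Step.var hj hjn hE (List.getElem?_eq_getElem hi)⟩
      | app s1 s2 => exact go ⟨_, Step.app hj hjn hE⟩
      | abs s =>
        cases us with
        | cons a us => exact go ⟨_, Step.abs hj hjn hE⟩
        | nil =>
          exfalso
          obtain ⟨θ, r, h1, h2, h3⟩ := hσ.2 j hj hjn
          rw [hE] at h1
          obtain ⟨m, θ', -, hθ, -⟩ := hI.habs _ _ h1
          have hk : WN k (σ j) (app (var 0) u) := hk
          rw [h2] at hk
          obtain ⟨k', -, h5⟩ := (hθ.sub r).split hk hnf
          simp only [subst] at h5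
          cases h5 with
          | step s _ => cases s
  · exact go ⟨_, Step.w h⟩
  · exfalso
    cases M with
    | var => exact h
    | app => exact h
    | abs a =>
      simp only [subst] at hk
      cases hk with
      | step s _ => cases s

/-! ### Invariance of the machine under β-equivalence -/

def EnvEq (E E' : Env) : Prop := ∀ j, (E j).1 = (E' j).1 ∧ List.Forall₂ BetaEq (E j).2 (E' j).2

theorem EnvEq.upd {E E' : Env} (h : EnvEq E E') (n : ℕ) (s : Lam) {l l' : List Lam}
    (hl : List.Forall₂ BetaEq l l') :
    EnvEq (Function.update E n (s, l)) (Function.update E' n (s, l')) := by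
  intro j
  by_cases hj : j = n
  · subst hj; simpa using hl
  · simpa [Function.update_of_ne hj] using h j

theorem EnvEq.at {E E' : Env} (h : EnvEq E E') {j : ℕ} {s : Lam} {l : List Lam}
    (hE : E j = (s, l)) : ∃ l', E' j = (s, l') ∧ List.Forall₂ BetaEq l l' := by
  have := h j
  rw [hE] at this
  exact ⟨(E' j).2, by rw [Prod.ext_iff]; exact ⟨this.1.symm, rfl⟩, this.2⟩

theorem WR.steps {M M' : Lam} (h : WR M M') (n : ℕ) (E : Env) : Steps (n, E, M) (n, E, M') := by
  obtain ⟨k, h⟩ := h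
  induction h with
  | refl => exact Relation.ReflTransGen.refl
  | step s _ ih => exact Relation.ReflTransGen.head (Step.w s) ih

theorem Step.inv {n n' : ℕ} {E E' E1 : Env} {M M' M1 : Lam} (h : Step (n, E, M) (n', E', M'))
    (hE : EnvEq E E1) (hM : BetaEq M1 M) :
    ∃ E1' M1', Steps (n, E1, M1) (n', E1', M1') ∧ EnvEq E' E1' ∧ BetaEq M1' M' := by
  cases h with
  | w h =>
    exact ⟨E1, M1, Relation.ReflTransGen.refl, hE,
      hM.trans' (Relation.EqvGen.rel _ _ h.beta')⟩
  | @abs _ _ j s l u us hj hjn he =>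
    obtain ⟨vs, hv, hv'⟩ := beq_neut hM
    obtain ⟨l', he', hl⟩ := hE.at he
    cases hv' with
    | @cons _ v _ vs h1 h2 =>
      refine ⟨_, _, (hv.steps n E1).tail (Step.abs hj hjn he'), hE.upd n s
        (List.Forall₂.cons h1 hl), (appList_beq h2 (BetaEq.refl' _)).symm'⟩
  | @app _ _ j s1 s2 l us hj hjn he =>
    obtain ⟨vs, hv, hv'⟩ := beq_neut hM
    obtain ⟨l', he', hl⟩ := hE.at he
    exact ⟨_, _, (hv.steps n E1).tail (Step.app hj hjn he'), (hE.upd n s1 hl).upd (n+1) s2 hl,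
      (appList_beq (List.Forall₂.cons (BetaEq.refl' _) hv') (BetaEq.refl' _)).symm'⟩
  | @var _ _ j i l v us hj hjn he hi =>
    obtain ⟨vs, hv, hv'⟩ := beq_neut hM
    obtain ⟨l', he', hl⟩ := hE.at he
    obtain ⟨hlt, hi⟩ := List.getElem?_eq_some_iff.1 hi
    have hlt' : i < l'.length := by rw [← hl.length_eq]; exact hlt
    have hb : BetaEq v l'[i] := by
      rw [← hi]; exact hl.get hlt hlt'
    exact ⟨_, _, (hv.steps n E1).tail (Step.var hj hjn he' (List.getElem?_eq_getElem hlt')), hE,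
      (appList_beq hv' hb).symm'⟩

theorem Steps.inv {S S' : ℕ × Env × Lam} (h : Steps S S') : ∀ {E1 : Env} {M1 : Lam},
    EnvEq S.2.1 E1 → BetaEq M1 S.2.2 →
    ∃ E1' M1', Steps (S.1, E1, M1) (S'.1, E1', M1') ∧ EnvEq S'.2.1 E1' ∧ BetaEq M1' S'.2.2 := by
  intro E1 M1 hE hM
  induction h with
  | refl => exact ⟨E1, M1, Relation.ReflTransGen.refl, hE, hM⟩
  | tail _ s ih =>
    obtain ⟨E2, M2, h1, h2, h3⟩ := ih
    obtain ⟨E3, M3, k1, k2, k3⟩ := Step.inv s h2 h3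
    exact ⟨E3, M3, h1.trans k1, k2, k3⟩

/-! ### Interpretations -/

theorem ip_bs : IP 0 BS where
  habs := by
    intro θ s h
    cases h.sd with
    | abs k h1 => obtain ⟨m, k⟩ := k; exact ⟨m, _, Nat.zero_le _, k, h1.bs⟩
  happ := by
    intro θ s1 s2 h
    cases h.sd with
    | app k h1 h2 => obtain ⟨m, k⟩ := k; exact ⟨m, _, _, Nat.zero_le _, k, h1.bs, h2.bs⟩
  hvar := by
    intro θ i h
    cases h.sd with
    | var k => obtain ⟨m, k⟩ := k; exact ⟨m, Nat.zero_le _, k⟩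

def mark (w : Lam → Lam) : Lam → Lam
  | var i => w (var i)
  | app a b => w (app (mark w a) (mark w b))
  | abs a => w (abs (mark w a))

def w1 (x : Lam) : Lam := app (abs (var 0)) x
def w2 (x : Lam) : Lam := app (app (abs (abs (var 0))) (abs (var 0))) x

theorem w1_wn (x : Lam) : WN 1 (w1 x) x := WN.step (WStep.beta _ _) (WN.refl _)
theorem w2_wn (x : Lam) : WN 2 (w2 x) x :=
  WN.step (WStep.appL _ (WStep.beta _ _)) (WN.step (WStep.beta _ _) (WN.refl _))

theorem ip_mark {w : Lam → Lam} {m : ℕ} (hm : 1 ≤ m) (hw : ∀ x, WN m (w x) x) :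
    IP 1 (fun θ s => θ = mark w s) where
  habs := by
    rintro θ s rfl
    exact ⟨m, _, hm, hw _, rfl⟩
  happ := by
    rintro θ s1 s2 rfl
    exact ⟨m, _, _, hm, hw _, rfl, rfl⟩
  hvar := by
    rintro θ i rfl
    exact ⟨m, hm, hw _⟩

theorem mark_bs {w : Lam → Lam} {m : ℕ} (hw : ∀ x, WN m (w x) x) (s : Lam) : BS (mark w s) s := by
  induction s with
  | var i => exact (show WR _ _ from ⟨m, hw _⟩).bs
  | app a b ha hb => exact (show WR _ _ from ⟨m, hw _⟩).bs.trans (BS.appc ha hb)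
  | abs a ha => exact (show WR _ _ from ⟨m, hw _⟩).bs.trans (BS.absc ha)

theorem mark1_subst (s : Lam) (r : ℕ → Lam) : ∃ a b, (mark w1 s).subst r = app (abs a) b := by
  cases s <;> exact ⟨_, _, rfl⟩

theorem mark2_subst (s : Lam) (r : ℕ → Lam) :
    ∃ a b c, (mark w2 s).subst r = app (app a b) c := by
  cases s <;> exact ⟨_, _, _, rfl⟩

/-! ### Erasure of terms with a free head variable -/

def FH : ℕ → Lam → Prop
  | k, var i => k ≤ i
  | k, app u _ => FH k u
  | _, abs _ => False

inductive SR : ℕ → Lam → Lam → Prop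
  | neut {k u v} : FH k u → SR k u v
  | var (k i) : SR k (var i) (var i)
  | app {k u u' v v'} : SR k u u' → SR k v v' → SR k (app u v) (app u' v')
  | abs {k u u'} : SR (k+1) u u' → SR k (abs u) (abs u')

theorem FH.ren {k m : ℕ} {u : Lam} {ρ : ℕ → ℕ} (h : FH k u) (hρ : ∀ i, k ≤ i → m ≤ ρ i) :
    FH m (u.rename ρ) := by
  induction u with
  | var i => exact hρ i h
  | app u v hu _ => exact hu h
  | abs u => exact h.elim

theorem FH.sub {k m : ℕ} {u : Lam} {σ : ℕ → Lam} (h : FH k u) (hσ : ∀ i, k ≤ i → FH m (σ i)) :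
    FH m (u.subst σ) := by
  induction u with
  | var i => exact hσ i h
  | app u v hu _ => exact hu h
  | abs u => exact h.elim

theorem FH.step {k : ℕ} {u v : Lam} (h : FH k u) (hs : Beta u v) : FH k v := by
  induction hs with
  | beta => exact h.elim
  | appL v _ ih => exact ih h
  | appR u _ ih => exact h
  | abs => exact h.elim

theorem SR.ren {k : ℕ} {u v : Lam} (h : SR k u v) : ∀ {m : ℕ} {ρ : ℕ → ℕ},
    (∀ i, k ≤ i → m ≤ ρ i) → SR m (u.rename ρ) (v.rename ρ) := by
  induction h with
  | neut h => intro m ρ hρ; exact SR.neut (h.ren hρ)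
  | var k i => intro m ρ hρ; exact SR.var _ _
  | app _ _ h1 h2 => intro m ρ hρ; exact SR.app (h1 hρ) (h2 hρ)
  | abs _ ih =>
    intro m ρ hρ
    simp only [rename_abs]
    refine SR.abs (ih ?_)
    intro i hi
    cases i with
    | zero => omega
    | succ i => have := hρ i (by omega); simp only [up]; omega

theorem SR.sub {k : ℕ} {u v : Lam} (h : SR k u v) : ∀ {m : ℕ} {σ σ' : ℕ → Lam},
    (∀ i, SR m (σ i) (σ' i)) → (∀ i, k ≤ i → FH m (σ i)) → SR m (u.subst σ) (v.subst σ') := by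
  induction h with
  | neut h => intro m σ σ' h1 h2; exact SR.neut (h.sub h2)
  | var k i => intro m σ σ' h1 h2; exact h1 i
  | app _ _ ih1 ih2 => intro m σ σ' h1 h2; exact SR.app (ih1 h1 h2) (ih2 h1 h2)
  | abs _ ih =>
    intro m σ σ' h1 h2
    refine SR.abs (ih ?_ ?_)
    · intro i
      cases i with
      | zero => exact SR.var _ _
      | succ i => exact (h1 i).ren (fun i hi => by simpa using hi)
    · intro i hi
      cases i with
      | zero => omega
      | succ i => exact (h2 i (by omega)).ren (fun i hi => by simpa using hi)

theorem SR.step {k : ℕ} {u v u1 : Lam} (h : SR k u v) (hs : Beta u u1) :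
    ∃ v1, BS v v1 ∧ SR k u1 v1 := by
  induction hs generalizing k v with
  | beta a b =>
    cases h with
    | neut h => exact h.elim
    | app h1 h2 =>
      cases h1 with
      | neut h => exact h.elim
      | abs h1 =>
        refine ⟨_, Relation.ReflTransGen.single (Beta.beta _ _), ?_⟩
        simp only [subst0_eq]
        refine h1.sub ?_ ?_
        · intro i
          cases i with
          | zero => exact h2
          | succ i => exact SR.var _ _
        · intro i hi
          cases i with
          | zero => omega
          | succ i => exact Nat.le_of_succ_le_succ hi
  | appL b hs ih =>
    cases h with
    | neut h => exact ⟨v, Relation.ReflTransGen.refl, SR.neut (h.step (Beta.appL b hs))⟩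
    | app h1 h2 =>
      obtain ⟨x, hx, hx'⟩ := ih h1
      exact ⟨_, BS.appc hx Relation.ReflTransGen.refl, SR.app hx' h2⟩
  | appR b hs ih =>
    cases h with
    | neut h => exact ⟨v, Relation.ReflTransGen.refl, SR.neut (h.step (Beta.appR b hs))⟩
    | app h1 h2 =>
      obtain ⟨x, hx, hx'⟩ := ih h2
      exact ⟨_, BS.appc Relation.ReflTransGen.refl hx, SR.app h1 hx'⟩
  | abs hs ih =>
    cases h with
    | neut h => exact h.elim
    | abs h1 =>
      obtain ⟨x, hx, hx'⟩ := ih h1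
      exact ⟨_, BS.absc hx, SR.abs hx'⟩

theorem SR.steps {k : ℕ} {u v u1 : Lam} (h : SR k u v) (hs : BS u u1) :
    ∃ v1, BS v v1 ∧ SR k u1 v1 := by
  induction hs with
  | refl => exact ⟨v, Relation.ReflTransGen.refl, h⟩
  | tail _ s ih =>
    obtain ⟨x, h1, h2⟩ := ih
    obtain ⟨y, h3, h4⟩ := h2.step s
    exact ⟨y, h1.trans h3, h4⟩

theorem FH.not_closed {k : ℕ} {u : Lam} (h : FH k u) (hc : ClosedUnder k u) : False := by
  induction u with
  | var i => exact absurd hc (Nat.not_lt.2 h)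
  | app u v hu _ => exact hu h hc.1
  | abs u => exact h

theorem SR.closed {k : ℕ} {u v : Lam} (h : SR k u v) (hc : ClosedUnder k u) : u = v := by
  induction h with
  | neut h => exact (h.not_closed hc).elim
  | var => rfl
  | app _ _ h1 h2 => rw [h1 hc.1, h2 hc.2]
  | abs _ h => rw [h hc]

def BMark (k n : ℕ) (b1 b2 : ℕ → Lam) : Prop := ∀ i, k ≤ i → i < k + n →
  (∃ l, k ≤ l ∧ b1 i = var l) ∨
  ((∃ x y, b1 i = app (abs x) y) ∧ (∃ x y z, b2 i = app (app x y) z))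

theorem BMark.lift {k n : ℕ} {b1 b2 : ℕ → Lam} (h : BMark k n b1 b2) :
    BMark (k+1) n (liftSub b1) (liftSub b2) := by
  intro i h1 h2
  cases i with
  | zero => omega
  | succ i =>
    rcases h i (by omega) (by omega) with ⟨l, h3, h4⟩ | ⟨⟨x, y, h3⟩, ⟨x', y', z', h4⟩⟩
    · exact Or.inl ⟨l+1, by omega, by simp [liftSub, h4, rename]⟩
    · exact Or.inr ⟨⟨_, _, by simp only [liftSub, h3, rename]; rfl⟩,
        ⟨_, _, _, by simp only [liftSub, h4, rename]; rfl⟩⟩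

theorem lift_id {k : ℕ} {b : ℕ → Lam} (h : ∀ i, i < k → b i = var i) :
    ∀ i, i < k+1 → liftSub b i = var i := by
  intro i hi
  cases i with
  | zero => rfl
  | succ i => simp [liftSub, h i (by omega), rename]

theorem sr_of_eq (τ' : Lam) : ∀ (τ : Lam) (k n : ℕ) (a1 a2 b1 b2 : ℕ → Lam),
    (∀ i, i < k → a1 i = var i) → (∀ i, i < k → a2 i = var i) → (∀ i, i < k → b1 i = var i) →
    (∀ i, i < k → b2 i = var i) → BMark k n b1 b2 → ClosedUnder (k+n) τ' →
    τ.subst a1 = τ'.subst b1 → τ.subst a2 = τ'.subst b2 → SR k τ τ' := by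
  induction τ' with
  | var l =>
    intro τ k n a1 a2 b1 b2 ha1 ha2 hb1 hb2 hm hc e1 e2
    simp only [subst] at e1 e2
    by_cases hl : l < k
    · rw [hb1 l hl] at e1
      cases τ with
      | var i =>
        by_cases hi : i < k
        · simp only [subst, ha1 i hi] at e1
          rw [e1]; exact SR.var _ _
        · exact SR.neut (Nat.le_of_not_lt hi)
      | app => cases e1
      | abs => cases e1
    · rcases hm l (by omega) hc with ⟨j, h3, h4⟩ | ⟨⟨x, y, h3⟩, ⟨x', y', z', h4⟩⟩
      · rw [h4] at e1
        cases τ with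
        | var i =>
          by_cases hi : i < k
          · simp only [subst, ha1 i hi] at e1
            injection e1 with e1
            omega
          · exact SR.neut (Nat.le_of_not_lt hi)
        | app => cases e1
        | abs => cases e1
      · rw [h3] at e1
        rw [h4] at e2
        cases τ with
        | var i =>
          by_cases hi : i < k
          · simp only [subst, ha1 i hi] at e1
            cases e1
          · exact SR.neut (Nat.le_of_not_lt hi)
        | abs => cases e1
        | app u v =>
          simp only [subst] at e1 e2
          injection e1 with e1 _
          injection e2 with e2 _
          cases u with
          | var i =>
            by_cases hi : i < k
            · simp only [subst, ha1 i hi] at e1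
              cases e1
            · exact SR.neut (Nat.le_of_not_lt hi)
          | abs => cases e2
          | app => cases e1
  | app p q hp hq =>
    intro τ k n a1 a2 b1 b2 ha1 ha2 hb1 hb2 hm hc e1 e2
    cases τ with
    | var i =>
      by_cases hi : i < k
      · simp only [subst, ha1 i hi] at e1
        cases e1
      · exact SR.neut (Nat.le_of_not_lt hi)
    | abs => cases e1
    | app u v =>
      simp only [subst] at e1 e2
      injection e1 with e1 f1
      injection e2 with e2 f2
      exact SR.app (hp u k n a1 a2 b1 b2 ha1 ha2 hb1 hb2 hm hc.1 e1 e2)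
        (hq v k n a1 a2 b1 b2 ha1 ha2 hb1 hb2 hm hc.2 f1 f2)
  | abs p hp =>
    intro τ k n a1 a2 b1 b2 ha1 ha2 hb1 hb2 hm hc e1 e2
    cases τ with
    | var i =>
      by_cases hi : i < k
      · simp only [subst, ha1 i hi] at e1
        cases e1
      · exact SR.neut (Nat.le_of_not_lt hi)
    | app => cases e1
    | abs u =>
      simp only [subst] at e1 e2
      injection e1 with e1
      injection e2 with e2
      refine SR.abs (hp u (k+1) n _ _ _ _ (lift_id ha1) (lift_id ha2) (lift_id hb1) (lift_id hb2)
        hm.lift ?_ e1 e2)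
      rw [Nat.add_right_comm]; exact hc

/-! ### Assembling -/

def E0 (t : Lam) : Env := fun _ => (t, [])

theorem wfe0 {t : Lam} (ht : Closed t) : WFE 2 (E0 t) :=
  ⟨by omega, fun j _ _ => ⟨ht, fun u hu => absurd hu List.not_mem_nil⟩⟩

def sg0 (θ : Lam) : ℕ → Lam
  | 0 => var 0
  | _ => θ

theorem interp0 {I : Lam → Lam → Prop} {θ t : Lam} (h : I θ t) : Interp I 2 (E0 t) (sg0 θ) := by
  refine ⟨rfl, ?_⟩
  intro j hj hj2
  refine ⟨θ, var, h, ?_, ?_⟩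
  · rw [subst_var]
    cases j with
    | zero => omega
    | succ j => rfl
  · intro i u hu; simp [E0] at hu

def M0 (T : Lam) : Lam := app (app T (var 1)) (var 0)

theorem m0_closed {T : Lam} (hT : Closed T) : ClosedUnder 2 (M0 T) :=
  ⟨⟨closed_mono _ 0 2 (by omega) hT, show 1 < 2 by omega⟩, show 0 < 2 by omega⟩

theorem m0_subst {T : Lam} (hT : Closed T) (θ : Lam) :
    (M0 T).subst (sg0 θ) = app (app T θ) (var 0) := by
  have : T.subst (sg0 θ) = T := by
    rw [subst_congr_closed T 0 _ var hT (fun i hi => absurd hi (Nat.not_lt_zero i)), subst_var]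
  simp only [M0, subst, this]
  rfl

theorem wr_final_unique {M u v : Lam} (h : WR M (app (var 0) u)) (h' : WR M (app (var 0) v)) :
    u = v := by
  obtain ⟨n, h⟩ := h
  obtain ⟨m, h'⟩ := h'
  obtain ⟨k, -, hk⟩ := h.split h' (not_wstep_appList_var [v] 0)
  cases hk with
  | refl => rfl
  | step s _ => exact absurd s (not_wstep_appList_var [u] 0 _)

theorem storage_inv {T T' t : Lam} (ht : Closed t) (htn : Normal t) (hT : Closed T)
    (hT' : Closed T') (hs : IsStorageFor T t) (heq : BetaEq T' T) : IsStorageFor T' t := by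
  obtain ⟨-, τ, hτ, hall⟩ := hs
  have i1 := ip_mark (le_refl 1) w1_wn
  have i2 := ip_mark (by omega) w2_wn
  obtain ⟨a1, -, ha1⟩ := hall (mark w1 t) (mark_bs w1_wn t).eq
  obtain ⟨a2, -, ha2⟩ := hall (mark w2 t) (mark_bs w2_wn t).eq
  replace ha1 := ha1.wr id
  replace ha2 := ha2.wr id
  rw [← m0_subst hT] at ha1 ha2
  obtain ⟨k, hk⟩ := ha1
  obtain ⟨n, E, τ', hst⟩ := terminate i1 _ k 2 (E0 t) (M0 T) _ (wfe0 ht) (m0_closed hT)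
    (interp0 rfl) hk
  obtain ⟨hwf, hcl, b1, hb1, hr1⟩ := Steps.sim i1 (le_refl 1) hst (σ := sg0 (mark w1 t))
    (wfe0 ht) (m0_closed hT) (interp0 rfl)
  obtain ⟨-, -, b2, hb2, hr2⟩ := Steps.sim i2 (le_refl 1) hst (σ := sg0 (mark w2 t))
    (wfe0 ht) (m0_closed hT) (interp0 rfl)
  simp only [subst, hb1.1, hb2.1] at hr1 hr2
  have e1 := wr_final_unique ⟨k, hk⟩ hr1
  have e2 := wr_final_unique ha2 hr2
  have hsr : SR 0 τ τ' := by
    refine sr_of_eq τ' τ 0 n a1 a2 b1 b2 (by omega) (by omega) (by omega) (by omega) ?_ ?_ e1 e2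
    · intro i _ hi
      by_cases h0 : i = 0
      · subst h0; exact Or.inl ⟨0, le_refl _, hb1.1⟩
      · right
        obtain ⟨θ, r, rfl, h2, -⟩ := hb1.2 i (Nat.pos_of_ne_zero h0) (by simpa using hi)
        obtain ⟨θ', r', rfl, h2', -⟩ := hb2.2 i (Nat.pos_of_ne_zero h0) (by simpa using hi)
        rw [h2, h2']
        exact ⟨mark1_subst _ _, mark2_subst _ _⟩
    · rw [Nat.zero_add]; exact hcl.2
  obtain ⟨t', ht1, ht2⟩ := hsr.steps (hτ.normal htn)
  have := ht2.closed ht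
  subst this
  obtain ⟨E1, M1, hst1, -, hM1⟩ := Steps.inv hst (E1 := E0 t) (M1 := M0 T')
    (fun j => ⟨rfl, List.Forall₂.nil⟩)
    ((heq.appc (BetaEq.refl' _)).appc (BetaEq.refl' _))
  obtain ⟨us, hus, hus'⟩ := beq_neut (us := [τ']) (j := 0) hM1
  cases hus' with
  | @cons _ τ2 _ _ h1 h2 =>
  cases h2
  have hst2 := hst1.trans (hus.steps n E1)
  refine ⟨hT', τ2, h1.symm'.trans' ht1.eq, ?_⟩
  intro θ hθ
  obtain ⟨-, -, σ, hσ, hr⟩ := Steps.sim ip_bs (by omega) hst2 (σ := sg0 θ)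
    (wfe0 ht) (m0_closed hT') (interp0 (hθ.normal htn))
  refine ⟨σ, hσ.1, ?_⟩
  rw [← m0_subst hT']
  have := hr.head
  simp only [appList, List.foldl, subst, hσ.1] at this
  exact this

end Lam

open Lam in
/-- Storage operators are invariant under β-equivalence. -/
theorem stmt8 (D : Set Lam) (hD : ∀ t ∈ D, Closed t ∧ Normal t)
    (T T' : Lam) (hT : Closed T) (hT' : Closed T')
    (hstor : ∀ t ∈ D, IsStorageFor T t) (heq : BetaEq T' T) :
    ∀ t ∈ D, IsStorageFor T' t := by
  intro t ht
  exact storage_inv (hD t ht).1 (hD t ht).2 hT hT' (hstor t ht) heq
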